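/- Let f : {0,1}^n × {0,1}^n → {0,1} and let μ be a product distribution on {0,1}^n × {0,1}^n. Suppose there exists an integer k ≥ 20 such that ⌈100 · log srec^μ_{δ,δ}(f)⌉ ≤ k for δ = 1/(30·100·(k+1)^4). Then there exists a universal constant C > 0 (independent of f, μ, n, k) such that CC^μ_{0.49}(f) ≤ C · k². -/

import Mathlib

open scoped BigOperators
open scoped Classical

noncomputable section

/-! ## Probability distributions on finite types -/

/-- `p` is a probability distribution on the finite type `α`. -/
def IsDist {α : Type} [Fintype α] (p : α → ℝ) : Prop :=
  (∀ a, 0 ≤ p a) ∧ ∑ a, p a = 1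

/-- `μ` (in curried form) is a probability distribution on `X × Y`. -/
def IsDist2 {X Y : Type} [Fintype X] [Fintype Y] (μ : X → Y → ℝ) : Prop :=
  (∀ x y, 0 ≤ μ x y) ∧ ∑ x, ∑ y, μ x y = 1

/-! ## Deterministic communication protocols -/

/-- A deterministic two-party communication protocol: a finite binary tree where each
internal node is owned by Alice (`nodeA`) or Bob (`nodeB`) and is labeled by a function
of that player's input choosing one of the two children; leaves carry Boolean outputs. -/
inductive Protocol (X Y : Type) : Type
  | leaf : Bool → Protocol X Y
  | nodeA : (X → Bool) → Protocol X Y → Protocol X Y → Protocol X Y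
  | nodeB : (Y → Bool) → Protocol X Y → Protocol X Y → Protocol X Y

namespace Protocol

def eval {X Y : Type} : Protocol X Y → X → Y → Bool
  | leaf b, _, _ => b
  | nodeA g t0 t1, x, y => if g x then eval t1 x y else eval t0 x y
  | nodeB g t0 t1, x, y => if g y then eval t1 x y else eval t0 x y

/-- Depth (number of bits communicated in the worst case). -/
def depth {X Y : Type} : Protocol X Y → ℕ
  | leaf _ => 0
  | nodeA _ t0 t1 => max (depth t0) (depth t1) + 1
  | nodeB _ t0 t1 => max (depth t0) (depth t1) + 1

/-- Number of leaves. -/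
def leavesCount {X Y : Type} : Protocol X Y → ℕ
  | leaf _ => 1
  | nodeA _ t0 t1 => leavesCount t0 + leavesCount t1
  | nodeB _ t0 t1 => leavesCount t0 + leavesCount t1

/-- The sequence of bits communicated on input `(x, y)`. -/
def transcript {X Y : Type} : Protocol X Y → X → Y → List Bool
  | leaf _, _, _ => []
  | nodeA g t0 t1, x, y =>
      if g x then true :: transcript t1 x y else false :: transcript t0 x y
  | nodeB g t0 t1, x, y =>
      if g y then true :: transcript t1 x y else false :: transcript t0 x y

end Protocol

/-- Error of a deterministic protocol w.r.t. input distribution `μ`. -/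
def commErr {X Y : Type} [Fintype X] [Fintype Y]
    (μ : X → Y → ℝ) (f : X → Y → Bool) (P : Protocol X Y) : ℝ :=
  ∑ x, ∑ y, if P.eval x y ≠ f x y then μ x y else 0

/-- Distributional communication complexity `CC^μ_ε(f)`: the minimum depth of a
deterministic protocol erring with probability at most `ε` under `μ`. -/
def CCdist {X Y : Type} [Fintype X] [Fintype Y]
    (μ : X → Y → ℝ) (f : X → Y → Bool) (ε : ℝ) : ℕ :=
  sInf {d : ℕ | ∃ P : Protocol X Y, P.depth ≤ d ∧ commErr μ f P ≤ ε}

/-- The advantage `adv_μ(Π)` of a protocol w.r.t. a (not necessarily normalized) measure. -/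
def protAdv {X Y : Type} [Fintype X] [Fintype Y]
    (μ : X → Y → ℝ) (f : X → Y → Bool) (P : Protocol X Y) : ℝ :=
  ∑ x, ∑ y, if P.eval x y = f x y then μ x y else - μ x y

/-! ## Information complexity -/

/-- Probability of an event under a finite (possibly unnormalized) distribution. -/
def prOf {Ω : Type} [Fintype Ω] (p : Ω → ℝ) (q : Ω → Prop) : ℝ :=
  ∑ ω, if q ω then p ω else 0

/-- Conditional mutual information `I(A ; B | C)` (in bits) of random variables `A`, `B`, `C`
defined on a finite probability space `(Ω, p)`. -/
def condMI {Ω α β γ : Type} [Fintype Ω] (p : Ω → ℝ)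
    (A : Ω → α) (B : Ω → β) (C : Ω → γ) : ℝ :=
  ∑ ω, p ω * Real.logb 2 (
    (prOf p (fun ω' => A ω' = A ω ∧ B ω' = B ω ∧ C ω' = C ω) *
      prOf p (fun ω' => C ω' = C ω)) /
    (prOf p (fun ω' => A ω' = A ω ∧ C ω' = C ω) *
      prOf p (fun ω' => B ω' = B ω ∧ C ω' = C ω)))

/-- Internal information cost `IC^μ(Π) = I(X;T|Y) + I(Y;T|X)` of the public-coin protocol
given by a distribution `ρ` on `Fin m` together with deterministic protocols `P r`; the
transcript `T` consists of the public randomness together with the communicated bits. -/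
def infoCost {X Y : Type} [Fintype X] [Fintype Y] (μ : X → Y → ℝ)
    {m : ℕ} (ρ : Fin m → ℝ) (P : Fin m → Protocol X Y) : ℝ :=
  condMI (fun ω : X × Y × Fin m => μ ω.1 ω.2.1 * ρ ω.2.2)
      (fun ω => ω.1)
      (fun ω => (ω.2.2, (P ω.2.2).transcript ω.1 ω.2.1))
      (fun ω => ω.2.1)
  + condMI (fun ω : X × Y × Fin m => μ ω.1 ω.2.1 * ρ ω.2.2)
      (fun ω => ω.2.1)
      (fun ω => (ω.2.2, (P ω.2.2).transcript ω.1 ω.2.1))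
      (fun ω => ω.1)

/-- Error of a public-coin protocol under input distribution `μ` and coin distribution `ρ`. -/
def randErr {X Y : Type} [Fintype X] [Fintype Y] (μ : X → Y → ℝ) (f : X → Y → Bool)
    {m : ℕ} (ρ : Fin m → ℝ) (P : Fin m → Protocol X Y) : ℝ :=
  ∑ x, ∑ y, ∑ r, if (P r).eval x y ≠ f x y then μ x y * ρ r else 0

/-- `IC^μ_ε(f)`: infimum of the information cost over all public-coin protocols computing
`f` with error at most `ε` under `μ`. -/
def ICmu {X Y : Type} [Fintype X] [Fintype Y]
    (μ : X → Y → ℝ) (f : X → Y → Bool) (ε : ℝ) : ℝ :=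
  sInf { c : ℝ | ∃ (m : ℕ) (ρ : Fin m → ℝ) (P : Fin m → Protocol X Y),
    IsDist ρ ∧ randErr μ f ρ P ≤ ε ∧ c = infoCost μ ρ P }

/-- `IC_ε(f) = max_μ IC^μ_ε(f)`. -/
def IC {X Y : Type} [Fintype X] [Fintype Y] (f : X → Y → Bool) (ε : ℝ) : ℝ :=
  sSup { c : ℝ | ∃ μ : X → Y → ℝ, IsDist2 μ ∧ c = ICmu μ f ε }

/-! ## Rectangles, smooth rectangle bound and partition bound -/

/-- Total weight of rectangles containing `(x, y)`: a combinatorial rectangle is a pair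
`R = (S, T)` of finite sets, and `(x,y) ∈ R` iff `x ∈ S ∧ y ∈ T`. -/
def rcov {X Y : Type} [Fintype X] [Fintype Y]
    (w : Finset X × Finset Y → ℝ) (x : X) (y : Y) : ℝ :=
  ∑ R : Finset X × Finset Y, if x ∈ R.1 ∧ y ∈ R.2 then w R else 0

/-- `μ(R)` for a rectangle `R`. -/
def rMass {X Y : Type} [Fintype X] [Fintype Y]
    (μ : X → Y → ℝ) (R : Finset X × Finset Y) : ℝ :=
  ∑ x, ∑ y, if x ∈ R.1 ∧ y ∈ R.2 then μ x y else 0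

/-- `μ_z(R) = μ(R ∩ f⁻¹(z))` for a rectangle `R`. -/
def rMassZ {X Y : Type} [Fintype X] [Fintype Y]
    (μ : X → Y → ℝ) (f : X → Y → Bool) (z : Bool) (R : Finset X × Finset Y) : ℝ :=
  ∑ x, ∑ y, if (x ∈ R.1 ∧ y ∈ R.2) ∧ f x y = z then μ x y else 0

/-- `μ_z = μ(f⁻¹(z))`. -/
def totalZ {X Y : Type} [Fintype X] [Fintype Y]
    (μ : X → Y → ℝ) (f : X → Y → Bool) (z : Bool) : ℝ :=
  ∑ x, ∑ y, if f x y = z then μ x y else 0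

/-- `|μ|`, the total mass of a measure. -/
def totalMass {X Y : Type} [Fintype X] [Fintype Y] (μ : X → Y → ℝ) : ℝ :=
  ∑ x, ∑ y, μ x y

/-- Restriction of a measure to a rectangle. -/
def restrictRect {X Y : Type} (μ : X → Y → ℝ) (R : Finset X × Finset Y) : X → Y → ℝ :=
  fun x y => if x ∈ R.1 ∧ y ∈ R.2 then μ x y else 0

/-- Distributional smooth rectangle bound `srec^{z,μ}_{ε,δ}(f)` (LP optimal value). -/
def srecZmu {X Y : Type} [Fintype X] [Fintype Y]
    (μ : X → Y → ℝ) (f : X → Y → Bool) (z : Bool) (ε δ : ℝ) : ℝ :=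
  sInf { v : ℝ | ∃ w : Finset X × Finset Y → ℝ,
    (∀ R, 0 ≤ w R) ∧
    ((1 - ε) * totalZ μ f z ≤ ∑ x, ∑ y, if f x y = z then μ x y * rcov w x y else 0) ∧
    (∀ x y, f x y ≠ z → rcov w x y ≤ δ) ∧
    (∀ x y, rcov w x y ≤ 1) ∧
    v = ∑ R : Finset X × Finset Y, w R }

/-- `srec^μ_{ε,δ}(f) = max{srec^{0,μ}_{ε,δ}(f), srec^{1,μ}_{ε,δ}(f)}`. -/
def srecMu {X Y : Type} [Fintype X] [Fintype Y]
    (μ : X → Y → ℝ) (f : X → Y → Bool) (ε δ : ℝ) : ℝ :=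
  max (srecZmu μ f false ε δ) (srecZmu μ f true ε δ)

/-- Smooth rectangle bound `srec^z_{ε,δ}(f)` (LP optimal value). -/
def srecZ {X Y : Type} [Fintype X] [Fintype Y]
    (f : X → Y → Bool) (z : Bool) (ε δ : ℝ) : ℝ :=
  sInf { v : ℝ | ∃ w : Finset X × Finset Y → ℝ,
    (∀ R, 0 ≤ w R) ∧
    (∀ x y, f x y = z → 1 - ε ≤ rcov w x y) ∧
    (∀ x y, f x y ≠ z → rcov w x y ≤ δ) ∧
    (∀ x y, rcov w x y ≤ 1) ∧
    v = ∑ R : Finset X × Finset Y, w R }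

/-- `srec_{ε,δ}(f) = max{srec^0_{ε,δ}(f), srec^1_{ε,δ}(f)}`. -/
def srec {X Y : Type} [Fintype X] [Fintype Y] (f : X → Y → Bool) (ε δ : ℝ) : ℝ :=
  max (srecZ f false ε δ) (srecZ f true ε δ)

/-- Partition bound `prt_ε(f)` (LP optimal value). -/
def prt {X Y : Type} [Fintype X] [Fintype Y] (f : X → Y → Bool) (ε : ℝ) : ℝ :=
  sInf { v : ℝ | ∃ w : Bool → Finset X × Finset Y → ℝ,
    (∀ z R, 0 ≤ w z R) ∧
    (∀ x y, 1 - ε ≤ rcov (w (f x y)) x y) ∧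
    (∀ x y, rcov (w false) x y + rcov (w true) x y = 1) ∧
    v = ∑ R : Finset X × Finset Y, (w false R + w true R) }

/-! ### General-output versions -/

/-- Smooth rectangle bound `srec^z_{ε,δ}(f)` for general output alphabet. -/
def srecZgen {X Y Z : Type} [Fintype X] [Fintype Y]
    (f : X → Y → Z) (z : Z) (ε δ : ℝ) : ℝ :=
  sInf { v : ℝ | ∃ w : Finset X × Finset Y → ℝ,
    (∀ R, 0 ≤ w R) ∧
    (∀ x y, f x y = z → 1 - ε ≤ rcov w x y) ∧
    (∀ x y, f x y ≠ z → rcov w x y ≤ δ) ∧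
    (∀ x y, rcov w x y ≤ 1) ∧
    v = ∑ R : Finset X × Finset Y, w R }

/-- `srec_{ε,δ}(f) = max_{z ∈ Z} srec^z_{ε,δ}(f)`. -/
def srecGen {X Y Z : Type} [Fintype X] [Fintype Y] [Fintype Z]
    (f : X → Y → Z) (ε δ : ℝ) : ℝ :=
  sSup (Set.range fun z : Z => srecZgen f z ε δ)

/-- Distributional smooth rectangle bound for general output alphabet. -/
def srecZmuGen {X Y Z : Type} [Fintype X] [Fintype Y]
    (μ : X → Y → ℝ) (f : X → Y → Z) (z : Z) (ε δ : ℝ) : ℝ :=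
  sInf { v : ℝ | ∃ w : Finset X × Finset Y → ℝ,
    (∀ R, 0 ≤ w R) ∧
    ((1 - ε) * (∑ x, ∑ y, if f x y = z then μ x y else 0) ≤
      ∑ x, ∑ y, if f x y = z then μ x y * rcov w x y else 0) ∧
    (∀ x y, f x y ≠ z → rcov w x y ≤ δ) ∧
    (∀ x y, rcov w x y ≤ 1) ∧
    v = ∑ R : Finset X × Finset Y, w R }

/-- `srec^μ_{ε,δ}(f) = max_{z ∈ Z} srec^{z,μ}_{ε,δ}(f)`. -/
def srecMuGen {X Y Z : Type} [Fintype X] [Fintype Y] [Fintype Z]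
    (μ : X → Y → ℝ) (f : X → Y → Z) (ε δ : ℝ) : ℝ :=
  sSup (Set.range fun z : Z => srecZmuGen μ f z ε δ)

/-- Partition bound for general output alphabet. -/
def prtGen {X Y Z : Type} [Fintype X] [Fintype Y] [Fintype Z]
    (f : X → Y → Z) (ε : ℝ) : ℝ :=
  sInf { v : ℝ | ∃ w : Z → Finset X × Finset Y → ℝ,
    (∀ z R, 0 ≤ w z R) ∧
    (∀ x y, 1 - ε ≤ rcov (w (f x y)) x y) ∧
    (∀ x y, (∑ z : Z, rcov (w z) x y) = 1) ∧
    v = ∑ z : Z, ∑ R : Finset X × Finset Y, w z R }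

/-! ## Decision trees, subcubes and the query partition bound -/

/-- Deterministic decision trees on `n` input bits. -/
inductive DTree (n : ℕ) : Type
  | leaf : Bool → DTree n
  | node : Fin n → DTree n → DTree n → DTree n

def DTree.eval {n : ℕ} : DTree n → (Fin n → Bool) → Bool
  | .leaf b, _ => b
  | .node i t0 t1, x => if x i then DTree.eval t1 x else DTree.eval t0 x

def DTree.depth {n : ℕ} : DTree n → ℕ
  | .leaf _ => 0
  | .node _ t0 t1 => max (DTree.depth t0) (DTree.depth t1) + 1

/-- Error of a decision tree w.r.t. the input distribution `μ`. -/
def qErr {n : ℕ} (μ : (Fin n → Bool) → ℝ) (g : (Fin n → Bool) → Bool) (T : DTree n) : ℝ :=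
  ∑ x, if T.eval x ≠ g x then μ x else 0

/-- Distributional query complexity `QC^μ_ε(g)`: minimum depth of a deterministic decision
tree erring with probability at most `ε` under `μ`. -/
def QCdist {n : ℕ} (μ : (Fin n → Bool) → ℝ) (g : (Fin n → Bool) → Bool) (ε : ℝ) : ℕ :=
  sInf {d : ℕ | ∃ T : DTree n, T.depth ≤ d ∧ qErr μ g T ≤ ε}

/-- A subcube of `{0,1}ⁿ`, given by its support pattern `s ∈ {0,1,⋆}ⁿ`. -/
abbrev Subcube (n : ℕ) := Fin n → Option Bool

/-- Membership in a subcube. -/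
def memCube {n : ℕ} (A : Subcube n) (x : Fin n → Bool) : Prop :=
  ∀ i, ∀ b, A i = some b → x i = b

/-- Size of (the support of) a subcube. -/
def cubeSize {n : ℕ} (A : Subcube n) : ℕ :=
  (Finset.univ.filter fun i => (A i).isSome).card

/-- Total weight of subcubes containing `x`. -/
def cubeCov {n : ℕ} (w : Subcube n → ℝ) (x : Fin n → Bool) : ℝ :=
  ∑ A : Subcube n, if memCube A x then w A else 0

/-- Query partition bound `qprt_ε(g)` (LP optimal value). -/
def qprt {n : ℕ} (g : (Fin n → Bool) → Bool) (ε : ℝ) : ℝ :=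
  sInf { v : ℝ | ∃ w : Bool → Subcube n → ℝ,
    (∀ z A, 0 ≤ w z A) ∧
    (∀ x, 1 - ε ≤ cubeCov (w (g x)) x) ∧
    (∀ x, cubeCov (w false) x + cubeCov (w true) x = 1) ∧
    v = ∑ A : Subcube n, (w false A + w true A) * 2 ^ cubeSize A }

/-- The bit-wise product distribution on `{0,1}ⁿ` with `p_i(1) = p i`, `p_i(0) = 1 - p i`. -/
def bitProd {n : ℕ} (p : Fin n → ℝ) : (Fin n → Bool) → ℝ :=
  fun x => ∏ i, if x i then p i else 1 - p i

/-- `μ(A)` for a subcube (or any set given by a membership predicate). -/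
def cubeMass {n : ℕ} (μ : (Fin n → Bool) → ℝ) (A : Subcube n) : ℝ :=
  ∑ x, if memCube A x then μ x else 0

/-- `μ_z(A) = μ(A ∩ g⁻¹(z))` for a subcube `A`. -/
def cubeMassZ {n : ℕ} (μ : (Fin n → Bool) → ℝ) (g : (Fin n → Bool) → Bool)
    (z : Bool) (A : Subcube n) : ℝ :=
  ∑ x, if memCube A x ∧ g x = z then μ x else 0

/-- `μ_z = μ(g⁻¹(z))`. -/
def qTotalZ {n : ℕ} (μ : (Fin n → Bool) → ℝ) (g : (Fin n → Bool) → Bool) (z : Bool) : ℝ :=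
  ∑ x, if g x = z then μ x else 0

/-- Mass of a finite set of pairs under the product measure `μA ⊗ μB`. -/
def pairMass {X Y : Type} (μA : X → ℝ) (μB : Y → ℝ) (A : Finset (X × Y)) : ℝ :=
  ∑ q ∈ A, μA q.1 * μB q.2

end

/-!
Let `u` and `w` be smooth covers of the zeros and of the ones of `f`, and measure a rectangle `R` by
the entropy of `u` on it: the sum over the rectangles `Q` of `u`, with their weights, of
`μ(Q ∩ R) log (μ(R) / μ(Q ∩ R))`. It is nonnegative, and at most `log (∑ u) + O(1)` on the input
space. When `R` is cut in two, by rows or by columns, it drops by at least a divergence comparing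
the densities of the rectangles of `u` in one part with those in `R`, scaled by the share of that
part.

On a rectangle which `u` or `w` hardly covers, a constant answer errs little. Any other rectangle
has a cut with a large part for which the drop is proportional to the mass of this part. Otherwise
restricting to the rows or to the columns of a large rectangle of `w` hardly changes the densities
of most rectangles of `u`; as `μ` is a product measure, neither does restricting to both, and so `u`
and `w` overlap on a constant fraction of `R`, which a small `δ` forbids.

The protocol proceeds in rounds. In one round, good cuts are made one after another, always
continuing on the remainder, and the round ends once the input falls in a large part. This is a
decision list of length `N`, which is evaluated with about `2 log N` bits: both players announce the
index of the first test passed by their own input. The large parts are processed further in the next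
round. Beyond what hardly covered parts contribute, the error is at most of the order of the initial
potential divided by the number of rounds, so `O(k)` rounds of `O(k)` bits suffice.
-/

/-! ### Rectangles -/

/-- Combinatorial rectangles, encoded as in `rcov` and `rMass`. In the product lattice `⊓` is
intersection of rectangles and `⊤` is the set of all inputs. -/
abbrev Rect (X Y : Type) := Finset X × Finset Y

/-- The rectangle `R` is cut into two rectangles, either by its rows or by its columns. -/
inductive IsCut {X Y : Type} (R : Rect X Y) : Rect X Y → Rect X Y → Prop
  | row {C : Finset X} (hC : C ⊆ R.1) : IsCut R (C, R.2) (R.1 \ C, R.2)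
  | col {D : Finset Y} (hD : D ⊆ R.2) : IsCut R (R.1, D) (R.1, R.2 \ D)

section Rectangles

variable {X Y : Type} {R R₁ R₂ : Rect X Y}

namespace IsCut

theorem inf (hR : IsCut R R₁ R₂) (Q : Rect X Y) : IsCut (Q ⊓ R) (Q ⊓ R₁) (Q ⊓ R₂) := by
  cases hR with
  | @row C hC =>
    rw [show Q ⊓ (R.1 \ C, R.2) = ((Q ⊓ R).1 \ (Q.1 ⊓ C), (Q ⊓ R).2) from
      Prod.ext (inf_sdiff_distrib_left Q.1 R.1 C) rfl]
    exact row (inf_le_inf_left Q.1 hC)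
  | @col D hD =>
    rw [show Q ⊓ (R.1, R.2 \ D) = ((Q ⊓ R).1, (Q ⊓ R).2 \ (Q.2 ⊓ D)) from
      Prod.ext rfl (inf_sdiff_distrib_left Q.2 R.2 D)]
    exact col (inf_le_inf_left Q.2 hD)

theorem left_le (hR : IsCut R R₁ R₂) : R₁ ≤ R := by
  cases hR with
  | row hC => exact ⟨hC, le_rfl⟩
  | col hD => exact ⟨le_rfl, hD⟩

end IsCut

variable [Fintype X] [Fintype Y] {g g₁ g₂ : X → Y → ℝ}

theorem rMass_eq_sum_product (g : X → Y → ℝ) (R : Rect X Y) :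
    rMass g R = ∑ p ∈ R.1 ×ˢ R.2, g p.1 p.2 := by
  rw [rMass, ← Fintype.sum_prod_type', ← Finset.sum_filter]
  exact Finset.sum_congr (by ext; simp) fun _ _ => rfl

theorem rMass_top (g : X → Y → ℝ) : rMass g ⊤ = ∑ x, ∑ y, g x y := by
  simp [rMass]

theorem rMass_nonneg (hg : ∀ x y, 0 ≤ g x y) (R : Rect X Y) : 0 ≤ rMass g R := by
  rw [rMass_eq_sum_product]
  exact Finset.sum_nonneg fun p _ => hg p.1 p.2

theorem rMass_le_rMass (hg : ∀ x y, g₁ x y ≤ g₂ x y) (R : Rect X Y) :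
    rMass g₁ R ≤ rMass g₂ R := by
  simp only [rMass_eq_sum_product]
  exact Finset.sum_le_sum fun p _ => hg p.1 p.2

theorem rMass_mono (hg : ∀ x y, 0 ≤ g x y) : Monotone (rMass g) := by
  intro Q R hQR
  simp only [rMass_eq_sum_product]
  exact Finset.sum_le_sum_of_subset_of_nonneg (Finset.product_subset_product hQR.1 hQR.2)
    fun p _ _ => hg p.1 p.2

theorem rMass_congr (hg : ∀ x ∈ R.1, ∀ y ∈ R.2, g₁ x y = g₂ x y) : rMass g₁ R = rMass g₂ R := by
  simp only [rMass_eq_sum_product]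
  exact Finset.sum_congr rfl fun p hp =>
    hg p.1 (Finset.mem_product.1 hp).1 p.2 (Finset.mem_product.1 hp).2

theorem rMass_sub (g₁ g₂ : X → Y → ℝ) (R : Rect X Y) :
    rMass (fun x y => g₁ x y - g₂ x y) R = rMass g₁ R - rMass g₂ R := by
  simp only [rMass_eq_sum_product, Finset.sum_sub_distrib]

theorem rMass_const_mul (c : ℝ) (g : X → Y → ℝ) (R : Rect X Y) :
    rMass (fun x y => c * g x y) R = c * rMass g R := by
  simp only [rMass_eq_sum_product, Finset.mul_sum]

theorem rMass_mul_apply (α : X → ℝ) (β : Y → ℝ) (R : Rect X Y) :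
    rMass (fun x y => α x * β y) R = (∑ x ∈ R.1, α x) * ∑ y ∈ R.2, β y := by
  rw [rMass_eq_sum_product, Finset.sum_mul_sum, ← Finset.sum_product']

theorem rMass_mul_rcov (g : X → Y → ℝ) (w : Rect X Y → ℝ) (R : Rect X Y) :
    rMass (fun x y => g x y * rcov w x y) R = ∑ Q, w Q * rMass g (Q ⊓ R) := by
  have inf_eq_filter (Q : Rect X Y) : (Q ⊓ R).1 ×ˢ (Q ⊓ R).2 =
      (R.1 ×ˢ R.2).filter fun p => p.1 ∈ Q.1 ∧ p.2 ∈ Q.2 := by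
    ext p
    simp only [Finset.mem_product, Finset.mem_filter, Prod.fst_inf, Prod.snd_inf,
      Finset.inf_eq_inter, Finset.mem_inter]
    tauto
  simp only [rMass_eq_sum_product, rcov, Finset.mul_sum, inf_eq_filter, Finset.sum_filter]
  rw [Finset.sum_comm]
  exact Finset.sum_congr rfl fun Q _ => Finset.sum_congr rfl fun p _ => by
    rw [mul_comm, ite_mul, zero_mul, mul_ite, mul_zero]

theorem IsCut.rMass_add (hR : IsCut R R₁ R₂) (g : X → Y → ℝ) :
    rMass g R₁ + rMass g R₂ = rMass g R := by
  simp only [rMass_eq_sum_product, Finset.sum_product]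
  cases hR with
  | row hC => rw [add_comm, Finset.sum_sdiff hC]
  | col hD =>
    rw [← Finset.sum_add_distrib]
    exact Finset.sum_congr rfl fun x _ => by rw [add_comm, Finset.sum_sdiff hD]

theorem rcov_nonneg {w : Rect X Y → ℝ} (hw : ∀ R, 0 ≤ w R) (x : X) (y : Y) : 0 ≤ rcov w x y :=
  Finset.sum_nonneg fun R _ => by split_ifs; exacts [hw R, le_rfl]

theorem exists_rcov_eq (hg : ∀ x y, 0 ≤ g x y) :
    ∃ w : Rect X Y → ℝ, (∀ R, 0 ≤ w R) ∧ rcov w = g := by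
  refine ⟨fun R => ∑ p : X × Y, if R = ({p.1}, {p.2}) then g p.1 p.2 else 0, fun R =>
    Finset.sum_nonneg fun p _ => ?_, ?_⟩
  · split_ifs
    exacts [hg p.1 p.2, le_rfl]
  · funext x y
    simp only [rcov, ← Finset.sum_filter]
    rw [Finset.sum_comm' (t' := {(x, y)}) (s' := fun p => {({p.1}, {p.2})})]
    · simp
    · grind

end Rectangles

/-! ### Communication protocols -/

section Communication

variable {X Y : Type} {d e m N : ℕ} {h h₀ h₁ : X → Y → Bool}

namespace Protocol

/-- The protocol with the roles of Alice and Bob interchanged, which turns statements about moves of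
Alice into statements about moves of Bob. -/
def swap : Protocol X Y → Protocol Y X
  | leaf b => leaf b
  | nodeA g t₀ t₁ => nodeB g t₀.swap t₁.swap
  | nodeB g t₀ t₁ => nodeA g t₀.swap t₁.swap

theorem eval_swap (P : Protocol X Y) : P.swap.eval = flip P.eval := by
  funext y x
  induction P with
  | leaf b => rfl
  | nodeA g t₀ t₁ ih₀ ih₁ => simp only [swap, flip, eval, ih₀, ih₁]
  | nodeB g t₀ t₁ ih₀ ih₁ => simp only [swap, flip, eval, ih₀, ih₁]

theorem depth_swap (P : Protocol X Y) : P.swap.depth = P.depth := by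
  induction P with
  | leaf b => rfl
  | nodeA g t₀ t₁ ih₀ ih₁ => simp only [swap, depth, ih₀, ih₁]
  | nodeB g t₀ t₁ ih₀ ih₁ => simp only [swap, depth, ih₀, ih₁]

end Protocol

/-- `h` is computed without error by a protocol communicating at most `d` bits. -/
def Computes (d : ℕ) (h : X → Y → Bool) : Prop :=
  ∃ P : Protocol X Y, P.depth ≤ d ∧ P.eval = h

namespace Computes

theorem const (b : Bool) : Computes 0 fun (_ : X) (_ : Y) => b :=
  ⟨.leaf b, le_rfl, rfl⟩

theorem mono (hh : Computes d h) (hde : d ≤ e) : Computes e h :=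
  let ⟨P, hd, hP⟩ := hh
  ⟨P, hd.trans hde, hP⟩

theorem flip (hh : Computes d h) : Computes d (flip h) := by
  obtain ⟨P, hd, rfl⟩ := hh
  exact ⟨P.swap, P.depth_swap.trans_le hd, P.eval_swap⟩

theorem ite_left (p : X → Prop) (hh₁ : Computes d h₁) (hh₀ : Computes d h₀) :
    Computes (d + 1) fun x y => if p x then h₁ x y else h₀ x y := by
  obtain ⟨P₁, hd₁, rfl⟩ := hh₁
  obtain ⟨P₀, hd₀, rfl⟩ := hh₀
  exact ⟨.nodeA (fun x => decide (p x)) P₀ P₁, Nat.succ_le_succ (max_le hd₀ hd₁),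
    by funext x y; simp only [Protocol.eval, decide_eq_true_eq]⟩

/-- The speaker sends `g x` in binary, least significant bit first. -/
theorem announce_left {g : X → ℕ} {h : ℕ → X → Y → Bool} (hg : ∀ x, g x < 2 ^ m)
    (hh : ∀ i, Computes d (h i)) : Computes (d + m) fun x y => h (g x) x y := by
  induction m generalizing g h with
  | zero =>
    have hg₀ (x : X) : g x = 0 := Nat.lt_one_iff.1 (hg x)
    simpa only [hg₀, add_zero] using hh 0
  | succ m ih =>
    have hg' (x : X) : g x / 2 < 2 ^ m := Nat.div_lt_of_lt_mul (by linarith [hg x, pow_succ 2 m])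
    have odd := ih (h := fun i => h (2 * i + 1)) hg' fun i => hh _
    have even := ih (h := fun i => h (2 * i)) hg' fun i => hh _
    rw [← add_assoc]
    convert odd.ite_left (fun x => g x % 2 = 1) even using 1
    funext x y
    split_ifs with hodd
    · rw [show 2 * (g x / 2) + 1 = g x by omega]
    · rw [show 2 * (g x / 2) = g x by omega]

theorem announce_right {g : Y → ℕ} {h : ℕ → X → Y → Bool} (hg : ∀ y, g y < 2 ^ m)
    (hh : ∀ i, Computes d (h i)) : Computes (d + m) fun x y => h (g y) x y :=
  (announce_left hg fun i => (hh i).flip).flip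

theorem announce_min {a : X → ℕ} {b : Y → ℕ} {h : ℕ → X → Y → Bool} (ha : ∀ x, a x < 2 ^ m)
    (hb : ∀ y, b y < 2 ^ m) (hh : ∀ i, Computes d (h i)) :
    Computes (d + 2 * m) fun x y => h (min (a x) (b y)) x y := by
  rw [two_mul, ← add_assoc]
  exact announce_left (h := fun i x y => h (min i (b y)) x y) ha fun i =>
    announce_right (h := fun j => h (min i j)) hb fun j => hh _

end Computes

/-- `h` is given by a decision list of length `N`: successive row sets and column sets are tested
and the first one containing the input selects a function computable with `d` bits. -/
inductive IsDecisionList (d : ℕ) : ℕ → (X → Y → Bool) → Prop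
  | last {N : ℕ} {h : X → Y → Bool} (hh : Computes d h) : IsDecisionList d N h
  | row {N : ℕ} {h₀ h : X → Y → Bool} (C : Finset X) (hh₀ : Computes d h₀)
      (hh : IsDecisionList d N h) :
      IsDecisionList d (N + 1) fun x y => if x ∈ C then h₀ x y else h x y
  | col {N : ℕ} {h₀ h : X → Y → Bool} (D : Finset Y) (hh₀ : Computes d h₀)
      (hh : IsDecisionList d N h) :
      IsDecisionList d (N + 1) fun x y => if y ∈ D then h₀ x y else h x y

namespace IsDecisionList

/-- The first test passed is the smaller of the first row test passed by `x` and the first column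
test passed by `y`, so each player can determine one of the two indices alone. -/
theorem exists_index (hh : IsDecisionList d N h) :
    ∃ (a : X → ℕ) (b : Y → ℕ) (g : ℕ → X → Y → Bool), (∀ x, a x ≤ N) ∧ (∀ y, b y ≤ N) ∧
      (∀ i, Computes d (g i)) ∧ h = fun x y => g (min (a x) (b y)) x y := by
  induction hh with
  | @last N h hh => exact ⟨0, 0, fun _ => h, by simp, by simp, fun _ => hh, rfl⟩
  | @row N h₀ h C hh₀ _ ih =>
    obtain ⟨a, b, g, ha, hb, hg, rfl⟩ := ih
    refine ⟨fun x => if x ∈ C then 0 else a x + 1, fun y => b y + 1,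
      fun i => i.casesOn h₀ g, fun x => ?_, fun y => Nat.succ_le_succ (hb y), ?_, ?_⟩
    · grind
    · rintro (_ | i)
      exacts [hh₀, hg i]
    · funext x y
      by_cases hx : x ∈ C <;> simp [hx, Nat.add_min_add_right]
  | @col N h₀ h D hh₀ _ ih =>
    obtain ⟨a, b, g, ha, hb, hg, rfl⟩ := ih
    refine ⟨fun x => a x + 1, fun y => if y ∈ D then 0 else b y + 1,
      fun i => i.casesOn h₀ g, fun x => Nat.succ_le_succ (ha x), fun y => ?_, ?_, ?_⟩
    · grind
    · rintro (_ | i)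
      exacts [hh₀, hg i]
    · funext x y
      by_cases hy : y ∈ D <;> simp [hy, Nat.add_min_add_right]

theorem computes (hh : IsDecisionList d N h) (hN : N < 2 ^ m) : Computes (d + 2 * m) h := by
  obtain ⟨a, b, g, ha, hb, hg, rfl⟩ := hh.exists_index
  exact Computes.announce_min (fun x => (ha x).trans_lt hN) (fun y => (hb y).trans_lt hN) hg

end IsDecisionList

end Communication

/-! ### Protocols from good cuts -/

section Rounds

variable {X Y : Type} {d m N : ℕ} {R R₁ R₂ : Rect X Y}

theorem IsCut.exists_isDecisionList {h₁ h₂ : X → Y → Bool} (hR : IsCut R R₁ R₂)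
    (hh₁ : Computes d h₁) (hh₂ : IsDecisionList d N h₂) :
    ∃ h, IsDecisionList d (N + 1) h ∧ (∀ x ∈ R₁.1, ∀ y ∈ R₁.2, h x y = h₁ x y) ∧
      ∀ x ∈ R₂.1, ∀ y ∈ R₂.2, h x y = h₂ x y := by
  cases hR with
  | @row C hC =>
    exact ⟨_, .row C hh₁ hh₂, fun x hx y _ => if_pos hx, fun x hx y _ =>
      if_neg (Finset.mem_sdiff.1 hx).2⟩
  | @col D hD =>
    exact ⟨_, .col D hh₁ hh₂, fun x _ y hy => if_pos hy, fun x _ y hy =>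
      if_neg (Finset.mem_sdiff.1 hy).2⟩

variable [Fintype X] [Fintype Y]

/-- The total cost on `R` of answering according to `h`, where answering `b` on input `(x, y)`
costs `κ b x y`. Costs may be negative. -/
noncomputable def answerCost (κ : Bool → X → Y → ℝ) (h : X → Y → Bool) (R : Rect X Y) : ℝ :=
  rMass (fun x y => κ (h x y) x y) R

/-- `R` can be cut so that one part has at least a fraction `q` of the mass of `R`, and the cut
lowers the total potential by at least `c` per unit of mass of that part. -/
def HasGoodCut (μ : X → Y → ℝ) (Φ : Rect X Y → ℝ) (c q : ℝ) (R : Rect X Y) : Prop :=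
  ∃ R₁ R₂, IsCut R R₁ R₂ ∧ q * rMass μ R ≤ rMass μ R₁ ∧ Φ R₁ + Φ R₂ + c * rMass μ R₁ ≤ Φ R

variable {κ : Bool → X → Y → ℝ} {μ : X → Y → ℝ} {Φ : Rect X Y → ℝ} {B L c q : ℝ}

theorem IsCut.answerCost_add {h h₁ h₂ : X → Y → Bool} (hR : IsCut R R₁ R₂)
    (hh₁ : ∀ x ∈ R₁.1, ∀ y ∈ R₁.2, h x y = h₁ x y)
    (hh₂ : ∀ x ∈ R₂.1, ∀ y ∈ R₂.2, h x y = h₂ x y) :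
    answerCost κ h R = answerCost κ h₁ R₁ + answerCost κ h₂ R₂ := by
  rw [answerCost, ← hR.rMass_add]
  congr 1 <;> refine rMass_congr fun x hx y hy => ?_
  exacts [by rw [hh₁ x hx y hy], by rw [hh₂ x hx y hy]]

/-- On the large part of each good cut continue with the given functions, on the small part keep
cutting. The potential drop pays for the weaker guarantee of the given functions, and the part still
uncut after `N` steps has a fraction at most `(1 - q) ^ N` of the mass. -/
theorem exists_isDecisionList_answerCost_le (hμ : ∀ x y, 0 ≤ μ x y) (hκ : ∀ b x y, κ b x y ≤ μ x y)
    (hΦ : ∀ R, 0 ≤ Φ R) (hB : 0 ≤ B) (hL : 0 ≤ L) (hq : q ≤ 1)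
    (hcut : ∀ R, (∃ b, rMass (κ b) R ≤ 0) ∨ HasGoodCut μ Φ c q R)
    (hd : ∀ R, ∃ h, Computes d h ∧ L * answerCost κ h R ≤ Φ R + (B + c) * rMass μ R) (N : ℕ)
    (R : Rect X Y) :
    ∃ h, IsDecisionList d N h ∧
      L * answerCost κ h R ≤ Φ R + (B + L * (1 - q) ^ N) * rMass μ R := by
  have hμR (R : Rect X Y) : 0 ≤ rMass μ R := rMass_nonneg hμ R
  have hpow (N : ℕ) : 0 ≤ (1 - q) ^ N := pow_nonneg (sub_nonneg.2 hq) N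
  induction N generalizing R with
  | zero =>
    obtain ⟨h, hh, -⟩ := hd R
    have hle : answerCost κ h R ≤ rMass μ R := rMass_le_rMass (fun x y => hκ _ x y) R
    refine ⟨h, .last hh, ?_⟩
    linarith [mul_le_mul_of_nonneg_left hle hL, hΦ R, mul_nonneg hB (hμR R)]
  | succ N ih =>
    rcases hcut R with ⟨b, hb⟩ | ⟨R₁, R₂, hR, hlarge, hdrop⟩
    · refine ⟨fun _ _ => b, .last ((Computes.const b).mono d.zero_le), ?_⟩
      have hcost : L * answerCost κ (fun _ _ => b) R ≤ 0 := mul_nonpos_of_nonneg_of_nonpos hL hb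
      have hrhs : 0 ≤ (B + L * (1 - q) ^ (N + 1)) * rMass μ R :=
        mul_nonneg (add_nonneg hB (mul_nonneg hL (hpow _))) (hμR R)
      linarith [hΦ R]
    · obtain ⟨h₁, hh₁, hcost₁⟩ := hd R₁
      obtain ⟨h₂, hh₂, hcost₂⟩ := ih R₂
      obtain ⟨h, hh, heq₁, heq₂⟩ := hR.exists_isDecisionList hh₁ hh₂
      refine ⟨h, hh, ?_⟩
      have hmass := hR.rMass_add μ
      have hsmall : L * (1 - q) ^ N * rMass μ R₂ ≤ L * (1 - q) ^ N * ((1 - q) * rMass μ R) :=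
        mul_le_mul_of_nonneg_left (by linarith) (mul_nonneg hL (hpow N))
      rw [hR.answerCost_add heq₁ heq₂, pow_succ, ← hmass]
      rw [← hmass] at hsmall
      linarith

theorem exists_computes_answerCost_le (hμ : ∀ x y, 0 ≤ μ x y) (hκ : ∀ b x y, κ b x y ≤ μ x y)
    (hΦ : ∀ R, 0 ≤ Φ R) (hc : 0 ≤ c) (hq : q ≤ 1)
    (hcut : ∀ R, (∃ b, rMass (κ b) R ≤ 0) ∨ HasGoodCut μ Φ c q R) (hN : N < 2 ^ m) (K : ℕ)
    (R : Rect X Y) :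
    ∃ h, Computes (K * (2 * m)) h ∧
      c * K * answerCost κ h R ≤ Φ R + c * K ^ 2 * (1 - q) ^ N * rMass μ R := by
  have hpow : 0 ≤ (1 - q) ^ N := pow_nonneg (sub_nonneg.2 hq) N
  induction K generalizing R with
  | zero => exact ⟨_, by simpa using Computes.const true, by simpa using hΦ R⟩
  | succ K ih =>
    have hprev (R : Rect X Y) : ∃ h, Computes (K * (2 * m)) h ∧
        c * (K + 1) * answerCost κ h R ≤ Φ R + (c * K ^ 2 * (1 - q) ^ N + c) * rMass μ R := by
      obtain ⟨h, hh, hcost⟩ := ih R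
      have hle : answerCost κ h R ≤ rMass μ R := rMass_le_rMass (fun x y => hκ _ x y) R
      exact ⟨h, hh, by linarith [mul_le_mul_of_nonneg_left hle hc]⟩
    obtain ⟨h, hh, hcost⟩ := exists_isDecisionList_answerCost_le hμ hκ hΦ
      (mul_nonneg (by positivity) hpow) (by positivity) hq hcut hprev N R
    refine ⟨h, by simpa only [add_one_mul] using hh.computes hN, ?_⟩
    have hslack : 0 ≤ c * K * (1 - q) ^ N * rMass μ R :=
      mul_nonneg (mul_nonneg (by positivity) hpow) (rMass_nonneg hμ R)
    push_cast
    linarith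

end Rounds

/-! ### The entropy potential -/

section Entropy

open Real InformationTheory

theorem mul_log_div_add_klFun {m M m₀ M₀ : ℝ} (hm : 0 ≤ m) (hmM : m ≤ M) (hm₀ : 0 < m₀)
    (hM₀ : 0 < M₀) :
    m * log (M / m) + M / M₀ * (m₀ * klFun ((m / M) / (m₀ / M₀))) =
      m * log (M₀ / m₀) + (M / M₀ * m₀ - m) := by
  rcases hm.eq_or_lt with rfl | hm
  · simp [klFun_zero]
  have hM : 0 < M := hm.trans_le hmM
  rw [klFun_apply, log_div (div_ne_zero hm.ne' hM.ne') (by positivity), log_div hm.ne' hM.ne',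
    log_div hm₀.ne' hM₀.ne', log_div hM.ne' hm.ne', log_div hM₀.ne' hm₀.ne']
  field_simp
  ring

/-- The log sum inequality for two summands, with one of the two divergences it discards. -/
theorem mul_log_div_add_le {m₁ m₂ M₁ M₂ : ℝ} (hm₁ : 0 ≤ m₁) (hm₂ : 0 ≤ m₂) (hmM₁ : m₁ ≤ M₁)
    (hmM₂ : m₂ ≤ M₂) :
    m₁ * log (M₁ / m₁) + m₂ * log (M₂ / m₂) + M₁ / (M₁ + M₂) *
        ((m₁ + m₂) * klFun ((m₁ / M₁) / ((m₁ + m₂) / (M₁ + M₂)))) ≤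
      (m₁ + m₂) * log ((M₁ + M₂) / (m₁ + m₂)) := by
  have hM₂ := hm₂.trans hmM₂
  rcases (add_nonneg hm₁ hm₂).eq_or_lt with hm | hm
  · obtain ⟨rfl, rfl⟩ := (add_eq_zero_iff_of_nonneg hm₁ hm₂).1 hm.symm
    simp
  have hM : 0 < M₁ + M₂ := by linarith
  have split₁ := mul_log_div_add_klFun hm₁ hmM₁ hm hM
  have split₂ := mul_log_div_add_klFun hm₂ hmM₂ hm hM
  have hkl : 0 ≤ M₂ / (M₁ + M₂) * ((m₁ + m₂) * klFun ((m₂ / M₂) / ((m₁ + m₂) / (M₁ + M₂)))) :=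
    mul_nonneg (by positivity) (mul_nonneg hm.le (klFun_nonneg (by positivity)))
  have hfrac : M₁ / (M₁ + M₂) * (m₁ + m₂) + M₂ / (M₁ + M₂) * (m₁ + m₂) = m₁ + m₂ := by
    rw [← add_mul, ← add_div, div_self hM.ne', one_mul]
  linarith

theorem mul_log_one_div_le {m W : ℝ} (hm : 0 ≤ m) (hW : 0 < W) :
    m * log (1 / m) ≤ m * log W + 1 / W := by
  rcases hm.eq_or_lt with rfl | hm
  · simpa using hW.le
  have hlog : log (1 / m) - log W ≤ 1 / (m * W) - 1 := by
    rw [← log_div (by positivity) hW.ne', div_div]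
    exact log_le_sub_one_of_pos (by positivity)
  calc m * log (1 / m) ≤ m * (log W + (1 / (m * W) - 1)) := by gcongr; linarith
    _ = m * log W + 1 / W - m := by field_simp; ring
    _ ≤ m * log W + 1 / W := by linarith

theorem one_eighth_le_klFun {t : ℝ} (ht₀ : 0 ≤ t) (ht : t ≤ 1 / 2) : 1 / 8 ≤ klFun t := by
  rcases ht₀.eq_or_lt with rfl | ht₀
  · norm_num [klFun_zero]
  have hdouble : 0 ≤ klFun (2 * t) := klFun_nonneg (by positivity)
  rw [klFun_apply, log_mul two_ne_zero ht₀.ne'] at hdouble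
  rw [klFun_apply]
  have hlog : t * log 2 ≤ 1 / 2 * 0.7 :=
    mul_le_mul ht (log_two_lt_d9.le.trans (by norm_num)) (log_nonneg one_le_two) (by norm_num)
  linarith

theorem one_fourth_le_mul_add_klFun {a b : ℝ} (ha : 0 ≤ a) (hb : 0 ≤ b) :
    1 / 4 ≤ a * b + 2 * (klFun a + klFun b) := by
  have hab := mul_nonneg ha hb
  have hka := klFun_nonneg ha
  have hkb := klFun_nonneg hb
  rcases le_or_gt a (1 / 2) with ha' | ha'
  · linarith [one_eighth_le_klFun ha ha']
  rcases le_or_gt b (1 / 2) with hb' | hb'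
  · linarith [one_eighth_le_klFun hb hb']
  · linarith [mul_lt_mul'' ha' hb' (by norm_num) (by norm_num)]

variable {X Y : Type} [Fintype X] [Fintype Y] {μ : X → Y → ℝ} {u w : Rect X Y → ℝ}
  {c q W θ δ : ℝ} {Q R R₁ R₂ : Rect X Y}

/-- The entropy of the fractional cover `u` on `R`: every rectangle `Q` contributes the mass of
`Q ⊓ R` times the logarithm of its inverse density in `R`. It vanishes when `Q ⊓ R` has mass zero,
whatever the value of the logarithm. -/
noncomputable def rectPotential (μ : X → Y → ℝ) (u : Rect X Y → ℝ) (R : Rect X Y) : ℝ :=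
  ∑ Q, u Q * (rMass μ (Q ⊓ R) * log (rMass μ R / rMass μ (Q ⊓ R)))

/-- The density of `Q` in `R'` relative to the density of `Q` in `R`. -/
noncomputable def densityRatio (μ : X → Y → ℝ) (R R' Q : Rect X Y) : ℝ :=
  (rMass μ (Q ⊓ R') / rMass μ R') / (rMass μ (Q ⊓ R) / rMass μ R)

/-- How much the densities of the rectangles of the cover `u` change from `R` to `R'`, measured by
the divergence function `klFun`. -/
noncomputable def coverDivergence (μ : X → Y → ℝ) (u : Rect X Y → ℝ) (R R' : Rect X Y) : ℝ :=
  ∑ Q, u Q * (rMass μ (Q ⊓ R) * klFun (densityRatio μ R R' Q))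

theorem densityRatio_nonneg (hμ : ∀ x y, 0 ≤ μ x y) (R R' Q : Rect X Y) :
    0 ≤ densityRatio μ R R' Q :=
  div_nonneg (div_nonneg (rMass_nonneg hμ _) (rMass_nonneg hμ _))
    (div_nonneg (rMass_nonneg hμ _) (rMass_nonneg hμ _))

theorem rectPotential_nonneg (hμ : ∀ x y, 0 ≤ μ x y) (hu : ∀ Q, 0 ≤ u Q) (R : Rect X Y) :
    0 ≤ rectPotential μ u R := by
  refine Finset.sum_nonneg fun Q _ => mul_nonneg (hu Q) ?_
  rcases (rMass_nonneg hμ (Q ⊓ R)).eq_or_lt with hQ | hQ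
  · rw [← hQ, zero_mul]
  · exact mul_nonneg hQ.le (log_nonneg ((one_le_div hQ).2 (rMass_mono hμ inf_le_right)))

theorem rectPotential_top_le (hμ : ∀ x y, 0 ≤ μ x y) (hμ₁ : rMass μ ⊤ = 1) (hu : ∀ Q, 0 ≤ u Q)
    (hu₁ : ∀ x y, rcov u x y ≤ 1) (hW : 1 ≤ W) (huW : ∑ Q, u Q ≤ W) :
    rectPotential μ u ⊤ ≤ log W + 1 := by
  have hW₀ : 0 < W := one_pos.trans_le hW
  have hcover : ∑ Q, u Q * rMass μ (Q ⊓ ⊤) ≤ 1 := by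
    rw [← rMass_mul_rcov, ← hμ₁]
    exact rMass_le_rMass (fun x y => mul_le_of_le_one_right (hμ x y) (hu₁ x y)) ⊤
  calc rectPotential μ u ⊤
      ≤ ∑ Q, u Q * (rMass μ (Q ⊓ ⊤) * log W + 1 / W) := by
        rw [rectPotential, hμ₁]
        exact Finset.sum_le_sum fun Q _ => mul_le_mul_of_nonneg_left
          (mul_log_one_div_le (rMass_nonneg hμ _) hW₀) (hu Q)
    _ = (∑ Q, u Q * rMass μ (Q ⊓ ⊤)) * log W + (∑ Q, u Q) * (1 / W) := by
        simp only [Finset.sum_mul, mul_add, Finset.sum_add_distrib, mul_assoc]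
    _ ≤ 1 * log W + W * (1 / W) := by
        gcongr
        exact log_nonneg hW
    _ = log W + 1 := by rw [one_mul, mul_one_div_cancel hW₀.ne']

theorem IsCut.rectPotential_add_le (hR : IsCut R R₁ R₂) (hμ : ∀ x y, 0 ≤ μ x y)
    (hu : ∀ Q, 0 ≤ u Q) :
    rectPotential μ u R₁ + rectPotential μ u R₂ +
      rMass μ R₁ / rMass μ R * coverDivergence μ u R R₁ ≤ rectPotential μ u R := by
  simp only [rectPotential, coverDivergence, densityRatio, Finset.mul_sum,
    ← Finset.sum_add_distrib]
  refine Finset.sum_le_sum fun Q _ => ?_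
  have hlog := mul_log_div_add_le (rMass_nonneg hμ (Q ⊓ R₁)) (rMass_nonneg hμ (Q ⊓ R₂))
    (rMass_mono hμ inf_le_right) (rMass_mono hμ inf_le_right)
  rw [hR.rMass_add, (hR.inf Q).rMass_add] at hlog
  linarith [mul_le_mul_of_nonneg_left hlog (hu Q)]

theorem IsCut.coverDivergence_lt (hR : IsCut R R₁ R₂) (hμ : ∀ x y, 0 ≤ μ x y)
    (hu : ∀ Q, 0 ≤ u Q) (hgood : ¬HasGoodCut μ (rectPotential μ u) c q R) (hR₁ : 0 < rMass μ R₁)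
    (hq : q * rMass μ R ≤ rMass μ R₁) : coverDivergence μ u R R₁ < c * rMass μ R := by
  have hμR : 0 < rMass μ R := hR₁.trans_le (rMass_mono hμ hR.left_le)
  have hdrop : rectPotential μ u R <
      rectPotential μ u R₁ + rectPotential μ u R₂ + c * rMass μ R₁ :=
    not_le.1 fun hdrop => hgood ⟨R₁, R₂, hR, hq, hdrop⟩
  have hsplit := hR.rectPotential_add_le hμ hu
  rw [← div_lt_iff₀ hμR]
  refine lt_of_mul_lt_mul_left ?_ hR₁.le
  rw [mul_div_left_comm, mul_comm (coverDivergence _ _ _ _), mul_comm (rMass μ R₁) c]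
  linarith

/-- `μ` is a product measure, not necessarily normalized. -/
def IsProduct {X Y : Type} (μ : X → Y → ℝ) : Prop :=
  ∃ (α : X → ℝ) (β : Y → ℝ), μ = fun x y => α x * β y

/-- Under a product measure, the density of `P` in `Q ⊓ R` arises from its density in `R` through
the two independent factors of restricting the rows and restricting the columns. -/
theorem IsProduct.rMass_inf_inf_mul (hprod : IsProduct μ) (hμ : ∀ x y, 0 ≤ μ x y) (P : Rect X Y)
    (hQ : 0 < rMass μ (Q ⊓ R)) :
    rMass μ (P ⊓ (Q ⊓ R)) * rMass μ R = rMass μ (P ⊓ R) * (rMass μ (Q ⊓ R) *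
      (densityRatio μ R (Q.1 ⊓ R.1, R.2) P * densityRatio μ R (R.1, Q.2 ⊓ R.2) P)) := by
  have hR := hQ.trans_le (rMass_mono hμ inf_le_right)
  rcases (rMass_nonneg hμ (P ⊓ R)).eq_or_lt with hP | hP
  · have hPQ : rMass μ (P ⊓ (Q ⊓ R)) = 0 :=
      le_antisymm (hP ▸ rMass_mono hμ (inf_le_inf_left P inf_le_right)) (rMass_nonneg hμ _)
    rw [hPQ, ← hP, zero_mul, zero_mul]
  · obtain ⟨α, β, rfl⟩ := hprod
    simp only [densityRatio, rMass_mul_apply, Prod.fst_inf, Prod.snd_inf] at hP hQ hR ⊢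
    obtain ⟨hP₁, hP₂⟩ := mul_ne_zero_iff.1 hP.ne'
    obtain ⟨hQ₁, hQ₂⟩ := mul_ne_zero_iff.1 hQ.ne'
    obtain ⟨hR₁, hR₂⟩ := mul_ne_zero_iff.1 hR.ne'
    field_simp

theorem IsProduct.one_fourth_mul_rMass_le (hprod : IsProduct μ) (hμ : ∀ x y, 0 ≤ μ x y)
    (hu : ∀ P, 0 ≤ u P) (hQ : 0 < rMass μ (Q ⊓ R)) :
    1 / 4 * rMass (fun x y => μ x y * rcov u x y) R ≤
      rMass μ R / rMass μ (Q ⊓ R) * rMass (fun x y => μ x y * rcov u x y) (Q ⊓ R) +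
        2 * (coverDivergence μ u R (Q.1 ⊓ R.1, R.2) + coverDivergence μ u R (R.1, Q.2 ⊓ R.2)) := by
  simp only [rMass_mul_rcov, coverDivergence, Finset.mul_sum, ← Finset.sum_add_distrib]
  refine Finset.sum_le_sum fun P _ => ?_
  have hfactor : rMass μ R / rMass μ (Q ⊓ R) * (u P * rMass μ (P ⊓ (Q ⊓ R))) =
      u P * rMass μ (P ⊓ R) *
        (densityRatio μ R (Q.1 ⊓ R.1, R.2) P * densityRatio μ R (R.1, Q.2 ⊓ R.2) P) := by
    rw [div_mul_eq_mul_div, div_eq_iff hQ.ne']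
    linear_combination u P * hprod.rMass_inf_inf_mul hμ P hQ
  have hscalar := mul_le_mul_of_nonneg_left (one_fourth_le_mul_add_klFun
    (densityRatio_nonneg hμ R (Q.1 ⊓ R.1, R.2) P) (densityRatio_nonneg hμ R (R.1, Q.2 ⊓ R.2) P))
    (mul_nonneg (hu P) (rMass_nonneg hμ (P ⊓ R)))
  linarith

/-- If no good cut exists, restricting `R` to the rows, or to the columns, of `Q` changes the
densities of most rectangles of the cover `u` only slightly. By independence the same then holds
for restricting to `Q` itself, so `u` still covers a constant fraction of `Q ⊓ R`. -/
theorem IsProduct.le_rMass_mul_rcov_inf (hprod : IsProduct μ) (hμ : ∀ x y, 0 ≤ μ x y)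
    (hu : ∀ P, 0 ≤ u P) (hq : 0 ≤ q)
    (hgood : ¬HasGoodCut μ (rectPotential μ u) (θ / 32) q R)
    (hcover : θ * rMass μ R < rMass (fun x y => μ x y * rcov u x y) R)
    (hQ : q * rMass μ R < rMass μ (Q ⊓ R)) :
    θ / 8 * rMass μ (Q ⊓ R) ≤ rMass (fun x y => μ x y * rcov u x y) (Q ⊓ R) := by
  have hQ₀ : 0 < rMass μ (Q ⊓ R) := (mul_nonneg hq (rMass_nonneg hμ R)).trans_lt hQ
  have hR₀ : 0 < rMass μ R := hQ₀.trans_le (rMass_mono hμ inf_le_right)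
  have hrow : rMass μ (Q ⊓ R) ≤ rMass μ (Q.1 ⊓ R.1, R.2) := rMass_mono hμ ⟨le_rfl, inf_le_right⟩
  have hcol : rMass μ (Q ⊓ R) ≤ rMass μ (R.1, Q.2 ⊓ R.2) := rMass_mono hμ ⟨inf_le_right, le_rfl⟩
  have hdiv_row : coverDivergence μ u R (Q.1 ⊓ R.1, R.2) < θ / 32 * rMass μ R :=
    (IsCut.row inf_le_right).coverDivergence_lt hμ hu hgood (hQ₀.trans_le hrow)
      (hQ.le.trans hrow)
  have hdiv_col : coverDivergence μ u R (R.1, Q.2 ⊓ R.2) < θ / 32 * rMass μ R :=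
    (IsCut.col inf_le_right).coverDivergence_lt hμ hu hgood (hQ₀.trans_le hcol)
      (hQ.le.trans hcol)
  have hsum := hprod.one_fourth_mul_rMass_le hμ hu hQ₀
  refine le_of_mul_le_mul_left ?_ (div_pos hR₀ hQ₀)
  calc rMass μ R / rMass μ (Q ⊓ R) * (θ / 8 * rMass μ (Q ⊓ R)) = θ / 8 * rMass μ R := by field_simp
    _ ≤ rMass μ R / rMass μ (Q ⊓ R) * rMass (fun x y => μ x y * rcov u x y) (Q ⊓ R) := by linarith

theorem mul_sub_le_rMass_mul_rcov {g : X → Y → ℝ} {a s : ℝ} (hw : ∀ Q, 0 ≤ w Q)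
    (hg : ∀ Q, a * (rMass μ (Q ⊓ R) - s) ≤ rMass g (Q ⊓ R)) :
    a * (rMass (fun x y => μ x y * rcov w x y) R - s * ∑ Q, w Q) ≤
      rMass (fun x y => g x y * rcov w x y) R := by
  simp only [rMass_mul_rcov, Finset.mul_sum, ← Finset.sum_sub_distrib]
  exact Finset.sum_le_sum fun Q _ => by linarith [mul_le_mul_of_nonneg_left (hg Q) (hw Q)]

/-- Without a good cut, `u` would cover a constant fraction of every large rectangle of `w`, and so
`u` and `w` would overlap on a constant fraction of `R`. -/
theorem IsProduct.hasGoodCut (hprod : IsProduct μ) (hμ : ∀ x y, 0 ≤ μ x y)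
    (hu : ∀ Q, 0 ≤ u Q) (hw : ∀ Q, 0 ≤ w Q) (hwW : ∑ Q, w Q ≤ W) (hq : 0 ≤ q) (hθ : 0 < θ)
    (hqW : q * W ≤ θ / 2) (hδ : δ ≤ θ ^ 2 / 16) (huw : ∀ x y, rcov u x y * rcov w x y ≤ δ)
    (hcover_u : θ * rMass μ R < rMass (fun x y => μ x y * rcov u x y) R)
    (hcover_w : θ * rMass μ R < rMass (fun x y => μ x y * rcov w x y) R) :
    HasGoodCut μ (rectPotential μ u) (θ / 32) q R := by
  by_contra hgood
  have hμR : 0 ≤ rMass μ R := rMass_nonneg hμ R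
  have hlarge (Q : Rect X Y) : θ / 8 * (rMass μ (Q ⊓ R) - q * rMass μ R) ≤
      rMass (fun x y => μ x y * rcov u x y) (Q ⊓ R) := by
    rcases lt_or_ge (q * rMass μ R) (rMass μ (Q ⊓ R)) with hQ | hQ
    · have := hprod.le_rMass_mul_rcov_inf hμ hu hq hgood hcover_u hQ
      linarith [mul_nonneg hθ.le (mul_nonneg hq hμR)]
    · exact (mul_nonpos_of_nonneg_of_nonpos (by positivity) (sub_nonpos.2 hQ)).trans
        (rMass_nonneg (fun x y => mul_nonneg (hμ x y) (rcov_nonneg hu x y)) _)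
  have hoverlap_le : rMass (fun x y => μ x y * rcov u x y * rcov w x y) R ≤ δ * rMass μ R := by
    rw [← rMass_const_mul]
    refine rMass_le_rMass (fun x y => ?_) R
    linarith [mul_le_mul_of_nonneg_left (huw x y) (hμ x y)]
  have hoverlap_ge := mul_sub_le_rMass_mul_rcov hw hlarge
  have hgap : θ / 2 * rMass μ R <
      rMass (fun x y => μ x y * rcov w x y) R - q * rMass μ R * ∑ Q, w Q := by
    linarith [mul_le_mul_of_nonneg_right hqW hμR,
      mul_le_mul_of_nonneg_left hwW (mul_nonneg hq hμR)]
  have hθgap := mul_lt_mul_of_pos_left hgap (by positivity : 0 < θ / 8)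
  linarith [mul_le_mul_of_nonneg_right hδ hμR]

end Entropy

/-! ### Smooth covers -/

section SmoothCover

variable {X Y : Type} [Fintype X] [Fintype Y] {μ : X → Y → ℝ} {f : X → Y → Bool} {z z' : Bool}
  {η δ θ W : ℝ}

/-- `w` is a feasible point of the linear program defining `srecZmu μ f z η δ`. -/
structure IsSmoothCover (μ : X → Y → ℝ) (f : X → Y → Bool) (z : Bool) (η δ : ℝ)
    (w : Rect X Y → ℝ) : Prop where
  nonneg : ∀ R, 0 ≤ w R
  coverage : (1 - η) * totalZ μ f z ≤ ∑ x, ∑ y, if f x y = z then μ x y * rcov w x y else 0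
  outside_le : ∀ x y, f x y ≠ z → rcov w x y ≤ δ
  le_one : ∀ x y, rcov w x y ≤ 1

theorem exists_isSmoothCover (hμ : ∀ x y, 0 ≤ μ x y) (f : X → Y → Bool) (z : Bool) (hη : 0 ≤ η)
    (hδ : 0 ≤ δ) : ∃ w, IsSmoothCover μ f z η δ w := by
  obtain ⟨w, hw, hcov⟩ := exists_rcov_eq (g := fun x y => if f x y = z then 1 else 0)
    fun x y => by split_ifs <;> norm_num
  refine ⟨w, hw, ?_, fun x y hf => by simpa [hcov, hf] using hδ, fun x y => ?_⟩
  · have htotal : 0 ≤ totalZ μ f z := Finset.sum_nonneg fun x _ => Finset.sum_nonneg fun y _ => by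
      split_ifs
      exacts [hμ x y, le_rfl]
    have heq : (∑ x, ∑ y, if f x y = z then μ x y * rcov w x y else 0) = totalZ μ f z :=
      Finset.sum_congr rfl fun x _ => Finset.sum_congr rfl fun y _ => by
        split_ifs with hf <;> simp [hcov, hf]
    rw [heq]
    exact mul_le_of_le_one_left htotal (by linarith)
  · rw [hcov]
    dsimp only
    split_ifs <;> norm_num

theorem exists_isSmoothCover_sum_lt (hμ : ∀ x y, 0 ≤ μ x y) (hη : 0 ≤ η) (hδ : 0 ≤ δ)
    (hW : srecZmu μ f z η δ < W) : ∃ w, IsSmoothCover μ f z η δ w ∧ ∑ Q, w Q < W := by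
  obtain ⟨w₀, hw₀⟩ := exists_isSmoothCover hμ f z hη hδ
  obtain ⟨_, ⟨w, hnonneg, hcoverage, houtside, hone, rfl⟩, hlt⟩ := exists_lt_of_csInf_lt
    (by exact ⟨_, w₀, hw₀.nonneg, hw₀.coverage, hw₀.outside_le, hw₀.le_one, rfl⟩) hW
  exact ⟨w, ⟨hnonneg, hcoverage, houtside, hone⟩, hlt⟩

theorem IsSmoothCover.rcov_mul_rcov_le {u w : Rect X Y → ℝ} (hu : IsSmoothCover μ f z η δ u)
    (hw : IsSmoothCover μ f z' η δ w) (hz : z ≠ z') (x : X) (y : Y) :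
    rcov u x y * rcov w x y ≤ δ := by
  have hu₀ := rcov_nonneg hu.nonneg x y
  have hw₀ := rcov_nonneg hw.nonneg x y
  by_cases hf : f x y = z
  · exact (mul_le_of_le_one_left hw₀ (hu.le_one x y)).trans (hw.outside_le x y (hf ▸ hz))
  · exact (mul_le_of_le_one_right hu₀ (hw.le_one x y)).trans (hu.outside_le x y hf)

variable {w : Bool → Rect X Y → ℝ}

theorem sum_uncovered_le (hμ₁ : ∑ x, ∑ y, μ x y = 1)
    (hw : ∀ z, IsSmoothCover μ f z η δ (w z)) :
    ∑ x, ∑ y, μ x y * (1 - rcov (w (f x y)) x y) ≤ η := by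
  have sum_fiber (g : Bool → X → Y → ℝ) :
      (∑ z, ∑ x, ∑ y, if f x y = z then g z x y else 0) = ∑ x, ∑ y, g (f x y) x y := by
    rw [Finset.sum_comm]
    refine Finset.sum_congr rfl fun x _ => ?_
    rw [Finset.sum_comm]
    exact Finset.sum_congr rfl fun y _ => Fintype.sum_ite_eq (f x y) fun z => g z x y
  have hcoverage := Finset.sum_le_sum fun z (_ : z ∈ Finset.univ) => (hw z).coverage
  simp only [totalZ, ← Finset.mul_sum] at hcoverage
  rw [sum_fiber fun _ => μ, sum_fiber fun z x y => μ x y * rcov (w z) x y, hμ₁] at hcoverage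
  simp only [mul_sub, mul_one, Finset.sum_sub_distrib, hμ₁]
  linarith

/-- The cost of answering `b` on input `(x, y)`: the mass of the error, less an allowance consisting
of a `θ` fraction of the mass and of the mass left uncovered by `w (f x y)`. -/
noncomputable def excessCost (θ : ℝ) (μ : X → Y → ℝ) (f : X → Y → Bool)
    (w : Bool → Rect X Y → ℝ) (b : Bool) (x : X) (y : Y) : ℝ :=
  (if b ≠ f x y then μ x y else 0) - (θ * μ x y + μ x y * (1 - rcov (w (f x y)) x y))

theorem excessCost_le (hμ : ∀ x y, 0 ≤ μ x y) (hθ : 0 ≤ θ)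
    (hw : ∀ z x y, rcov (w z) x y ≤ 1) (b : Bool) (x : X) (y : Y) :
    excessCost θ μ f w b x y ≤ μ x y := by
  have herr : (if b ≠ f x y then μ x y else 0) ≤ μ x y := by
    split_ifs
    exacts [le_rfl, hμ x y]
  have hallow : 0 ≤ θ * μ x y + μ x y * (1 - rcov (w (f x y)) x y) :=
    add_nonneg (mul_nonneg hθ (hμ x y)) (mul_nonneg (hμ x y) (sub_nonneg.2 (hw _ x y)))
  exact (sub_le_self _ hallow).trans herr

/-- Where `f = z`, the uncovered part of the allowance leaves only the mass covered by `w z` to be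
paid for. -/
theorem rMass_excessCost_not_nonpos (hμ : ∀ x y, 0 ≤ μ x y)
    (hw : ∀ z, IsSmoothCover μ f z η δ (w z)) {R : Rect X Y}
    (hR : rMass (fun x y => μ x y * rcov (w z) x y) R ≤ θ * rMass μ R) :
    rMass (excessCost θ μ f w !z) R ≤ 0 := by
  have hle (x : X) (y : Y) :
      excessCost θ μ f w (!z) x y ≤ μ x y * rcov (w z) x y - θ * μ x y := by
    have hcov := mul_nonneg (hμ x y) (rcov_nonneg (hw z).nonneg x y)
    have huncov := mul_nonneg (hμ x y) (sub_nonneg.2 ((hw (f x y)).le_one x y))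
    by_cases hf : f x y = z
    · have hne : (!z) ≠ f x y := by simp [hf]
      rw [excessCost, if_pos hne, hf]
      linarith
    · have heq : ¬(!z) ≠ f x y := by simpa [eq_comm] using hf
      rw [excessCost, if_neg heq]
      linarith
  calc _ ≤ rMass (fun x y => μ x y * rcov (w z) x y - θ * μ x y) R := rMass_le_rMass hle R
    _ = rMass (fun x y => μ x y * rcov (w z) x y) R - θ * rMass μ R := by
        rw [rMass_sub, rMass_const_mul]
    _ ≤ 0 := sub_nonpos.2 hR

theorem commErr_le_answerCost_add (hμ₁ : ∑ x, ∑ y, μ x y = 1)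
    (hw : ∀ z, IsSmoothCover μ f z η δ (w z)) (P : Protocol X Y) :
    commErr μ f P ≤ answerCost (excessCost θ μ f w) P.eval ⊤ + (θ + η) := by
  have heq : answerCost (excessCost θ μ f w) P.eval ⊤ =
      commErr μ f P - (θ + ∑ x, ∑ y, μ x y * (1 - rcov (w (f x y)) x y)) := by
    simp only [answerCost, rMass_top, excessCost, commErr, Finset.sum_sub_distrib,
      Finset.sum_add_distrib, ← Finset.mul_sum, hμ₁, mul_one]
  linarith [sum_uncovered_le hμ₁ hw]

theorem exists_protocol_of_isSmoothCover (hμ : IsDist2 μ) (hprod : IsProduct μ)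
    (hw : ∀ z, IsSmoothCover μ f z η δ (w z)) (hwW : ∀ z, ∑ Q, w z Q ≤ W) (hW : 1 ≤ W)
    (hθ : 0 < θ) (hθ₁ : θ ≤ 1) (hδ : δ ≤ θ ^ 2 / 16) {N m : ℕ} (hN : N < 2 ^ m) (K : ℕ) :
    ∃ P : Protocol X Y, P.depth ≤ K * (2 * m) ∧ θ / 32 * K * (commErr μ f P - (θ + η)) ≤
      Real.log W + 1 + θ / 32 * K ^ 2 * (1 - θ / (2 * W)) ^ N := by
  obtain ⟨hμ₀, hμ₁⟩ := hμ
  have hcut (R : Rect X Y) : (∃ b, rMass (excessCost θ μ f w b) R ≤ 0) ∨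
      HasGoodCut μ (rectPotential μ (w false)) (θ / 32) (θ / (2 * W)) R := by
    by_cases hcover : ∃ z, rMass (fun x y => μ x y * rcov (w z) x y) R ≤ θ * rMass μ R
    · obtain ⟨z, hz⟩ := hcover
      exact .inl ⟨!z, rMass_excessCost_not_nonpos hμ₀ hw hz⟩
    · push Not at hcover
      exact .inr <| hprod.hasGoodCut hμ₀ (hw false).nonneg (hw true).nonneg (hwW true)
        (by positivity) hθ (by field_simp; rfl) hδ
        ((hw false).rcov_mul_rcov_le (hw true) Bool.false_ne_true) (hcover false) (hcover true)
  have hq : θ / (2 * W) ≤ 1 := (div_le_one (by positivity)).2 (by linarith)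
  obtain ⟨_, ⟨P, hdepth, rfl⟩, hcost⟩ := exists_computes_answerCost_le hμ₀
    (excessCost_le hμ₀ hθ.le fun z => (hw z).le_one) (rectPotential_nonneg hμ₀ (hw false).nonneg)
    (by positivity) hq hcut hN K ⊤
  have hμtop : rMass μ ⊤ = 1 := (rMass_top μ).trans hμ₁
  have hpot := rectPotential_top_le hμ₀ hμtop (hw false).nonneg (hw false).le_one hW (hwW false)
  rw [hμtop, mul_one] at hcost
  have herr : commErr μ f P - (θ + η) ≤ answerCost (excessCost θ μ f w) P.eval ⊤ :=
    sub_le_iff_le_add.2 (commErr_le_answerCost_add hμ₁ hw P)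
  exact ⟨P, hdepth, (mul_le_mul_of_nonneg_left herr (by positivity)).trans (by linarith)⟩

end SmoothCover

/-! ### Choice of parameters -/

theorem natCast_mul_mul_one_sub_pow_le_one {q : ℝ} (hq₀ : 0 ≤ q) (hq₁ : q ≤ 1) (N : ℕ) :
    N * q * (1 - q) ^ N ≤ 1 := by
  have hpow : 0 ≤ (1 - q) ^ N := pow_nonneg (sub_nonneg.2 hq₁) N
  calc N * q * (1 - q) ^ N ≤ (1 + q) ^ N * (1 - q) ^ N :=
        mul_le_mul_of_nonneg_right
          (by linarith [one_add_mul_le_pow (by linarith : (-2 : ℝ) ≤ q) N]) hpow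
    _ = (1 - q ^ 2) ^ N := by rw [← mul_pow]; ring
    _ ≤ 1 := pow_le_one₀ (by nlinarith) (by nlinarith)

theorem mul_sq_mul_one_sub_pow_le_one {θ : ℝ} (hθ : 0 ≤ θ) (hθ₁ : θ ≤ 1) (K l : ℕ) :
    θ / 32 * K ^ 2 * (1 - θ / (2 * 2 ^ l)) ^ (K ^ 2 * 2 ^ l) ≤ 1 := by
  have hpow₂ : (1 : ℝ) ≤ 2 ^ l := one_le_pow₀ one_le_two
  have hq₁ : θ / (2 * 2 ^ l) ≤ 1 := (div_le_one (by positivity)).2 (by linarith)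
  refine le_trans (mul_le_mul_of_nonneg_right ?_ (pow_nonneg (sub_nonneg.2 hq₁) _))
    (natCast_mul_mul_one_sub_pow_le_one (by positivity) hq₁ (K ^ 2 * 2 ^ l))
  calc θ / 32 * (K : ℝ) ^ 2 ≤ θ / 2 * K ^ 2 :=
        mul_le_mul_of_nonneg_right (by linarith) (sq_nonneg _)
    _ = (K ^ 2 * 2 ^ l : ℕ) * (θ / (2 * 2 ^ l)) := by
        push_cast
        field_simp

theorem lt_two_pow_succ_of_logb_le {x : ℝ} {k : ℕ} (hx : Real.logb 2 x ≤ k) :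
    x < 2 ^ (k + 1) := by
  rcases le_or_gt x 0 with hx₀ | hx₀
  · exact hx₀.trans_lt (by positivity)
  · rw [Real.logb_le_iff_le_rpow one_lt_two hx₀, Real.rpow_natCast] at hx
    exact hx.trans_lt (pow_lt_pow_right₀ one_lt_two k.lt_succ_self)

theorem sq_mul_two_pow_lt (A l : ℕ) : (A * l) ^ 2 * 2 ^ l < 2 ^ (2 * A + 3 * l) := by
  have hAl : A * l < 2 ^ A * 2 ^ l :=
    Nat.mul_lt_mul'' A.lt_two_pow_self l.lt_two_pow_self
  calc (A * l) ^ 2 * 2 ^ l < (2 ^ A * 2 ^ l) ^ 2 * 2 ^ l :=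
        Nat.mul_lt_mul_of_pos_right (Nat.pow_lt_pow_left hAl two_ne_zero) (by positivity)
    _ = 2 ^ (2 * A + 3 * l) := by ring

section

variable {X Y : Type} [Fintype X] [Fintype Y] {μ : X → Y → ℝ} {f : X → Y → Bool}
  {w : Bool → Rect X Y → ℝ} {ε η δ : ℝ}

/-- The error exceeds `ε / 2 + η` by at most a multiple of the potential, which is `O(l)`,
divided by the number of rounds. -/
theorem exists_protocol_commErr_le (hμ : IsDist2 μ) (hprod : IsProduct μ)
    (hw : ∀ z, IsSmoothCover μ f z η δ (w z)) {l : ℕ} (hl : 1 ≤ l)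
    (hwl : ∀ z, ∑ Q, w z Q ≤ 2 ^ l) (hε : 0 < ε) (hε₁ : ε ≤ 1) (hη : η ≤ ε / 4)
    (hδ : δ ≤ ε ^ 2 / 64) {A : ℕ} (hA : 192 / (ε / 2) ^ 2 ≤ A) :
    ∃ P : Protocol X Y, P.depth ≤ A * l * (2 * (2 * A + 3 * l)) ∧ commErr μ f P ≤ ε := by
  obtain ⟨P, hdepth, herr⟩ := exists_protocol_of_isSmoothCover hμ hprod hw hwl
    (one_le_pow₀ one_le_two) (half_pos hε) (by linarith) (by linarith) (sq_mul_two_pow_lt A l)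
    (A * l)
  refine ⟨P, hdepth, ?_⟩
  have hl' : (1 : ℝ) ≤ l := by exact_mod_cast hl
  have hlog : Real.log (2 ^ l) ≤ l := by
    rw [Real.log_pow]
    exact mul_le_of_le_one_right l.cast_nonneg (by linarith [Real.log_two_lt_d9])
  have huncut : ε / 2 / 32 * (A * l : ℕ) ^ 2 * (1 - ε / 2 / (2 * 2 ^ l)) ^ ((A * l) ^ 2 * 2 ^ l) ≤
      1 := mul_sq_mul_one_sub_pow_le_one (half_pos hε).le (by linarith) (A * l) l
  have hexcess : l * (A * (ε / 2 / 32 * (commErr μ f P - (ε / 2 + η)))) ≤ l * 3 := by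
    push_cast at herr huncut
    linarith
  have hA' : A * (ε / 2 / 32 * (commErr μ f P - (ε / 2 + η))) ≤ 3 :=
    le_of_mul_le_mul_left hexcess (by linarith)
  by_contra! hlarge
  have hgap : ε / 4 < commErr μ f P - (ε / 2 + η) := by linarith
  have h192 : 192 ≤ A * (ε / 2) ^ 2 := (div_le_iff₀ (by positivity)).1 hA
  have hApos : (0 : ℝ) < A := lt_of_lt_of_le (by positivity) hA
  have hexceeds := mul_lt_mul_of_pos_left hgap (by positivity : 0 < A * (ε / 2 / 32))
  linarith

end

/-! ### Communication complexity -/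

theorem CCdist_le_of_commErr_le {X Y : Type} [Fintype X] [Fintype Y] {μ : X → Y → ℝ}
    {f : X → Y → Bool} {ε : ℝ} {d : ℕ} {P : Protocol X Y} (hP : P.depth ≤ d)
    (herr : commErr μ f P ≤ ε) : CCdist μ f ε ≤ d :=
  Nat.sInf_le ⟨P, hP, herr⟩

theorem IsDist.isDist2_mul {X Y : Type} [Fintype X] [Fintype Y] {α : X → ℝ} {β : Y → ℝ}
    (hα : IsDist α) (hβ : IsDist β) : IsDist2 fun x y => α x * β y :=
  ⟨fun x y => mul_nonneg (hα.1 x) (hβ.1 y), by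
    rw [← Finset.sum_mul_sum, hα.2, hβ.2, one_mul]⟩

theorem cc_le_k_sq_general {ε : ℝ} (hε : 0 < ε) (hε₁ : ε ≤ 1) :
    ∃ C : ℝ, 0 < C ∧ ∀ (X Y : Type) [Fintype X] [Fintype Y] (f : X → Y → Bool) (μ : X → Y → ℝ),
      IsDist2 μ → IsProduct μ → ∀ η δ : ℝ, 0 ≤ η → η ≤ ε / 4 → 0 ≤ δ → δ ≤ ε ^ 2 / 64 →
        ∀ k : ℕ, 1 ≤ k → Real.logb 2 (srecMu μ f η δ) ≤ k → (CCdist μ f ε : ℝ) ≤ C * k ^ 2 := by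
  obtain ⟨A, hA⟩ := exists_nat_ge (192 / (ε / 2) ^ 2)
  have hA₀ : (0 : ℝ) < A := lt_of_lt_of_le (by positivity) hA
  refine ⟨8 * A * (2 * A + 3), by positivity, fun X Y _ _ f μ hμ hprod η δ hη₀ hη hδ₀ hδ k hk
    hs => ?_⟩
  have hcover (z : Bool) : ∃ w, IsSmoothCover μ f z η δ w ∧ ∑ Q, w Q < 2 ^ (k + 1) := by
    refine exists_isSmoothCover_sum_lt hμ.1 hη₀ hδ₀ (lt_of_le_of_lt ?_
      (lt_two_pow_succ_of_logb_le hs))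
    cases z
    exacts [le_max_left _ _, le_max_right _ _]
  choose w hw hwW using hcover
  obtain ⟨P, hdepth, herr⟩ := exists_protocol_commErr_le hμ hprod hw le_add_self
    (fun z => (hwW z).le) hε hε₁ hη hδ hA
  have hcost : A * (k + 1) * (2 * (2 * A + 3 * (k + 1))) ≤ 8 * A * (2 * A + 3) * k ^ 2 := by
    have hdouble : k + 1 ≤ 2 * k := by omega
    have hround : 2 * A + 3 * (k + 1) ≤ (2 * A + 3) * (2 * k) := by nlinarith
    calc _ ≤ A * (2 * k) * (2 * ((2 * A + 3) * (2 * k))) := by gcongr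
      _ = _ := by ring
  exact_mod_cast (CCdist_le_of_commErr_le hdepth herr).trans hcost

/-- **Theorem 2.2, part 2.** There is a universal constant `C > 0` such that for every `n`,
every `f : {0,1}ⁿ × {0,1}ⁿ → {0,1}`, every product distribution `μ`, and every integer
`k ≥ 20` with `⌈100 · log srec^μ_{δ,δ}(f)⌉ ≤ k` for `δ = 1/(30·100·(k+1)⁴)`, we have
`CC^μ_{0.49}(f) ≤ C · k²`. -/
theorem cc_le_k_sq :
    ∃ C : ℝ, 0 < C ∧
      ∀ (n : ℕ) (f : (Fin n → Bool) → (Fin n → Bool) → Bool)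
        (μA μB : (Fin n → Bool) → ℝ), IsDist μA → IsDist μB →
        ∀ k : ℕ, 20 ≤ k →
        ⌈(100 : ℝ) * Real.logb 2 (srecMu (fun x y => μA x * μB y) f
            (1 / (30 * 100 * ((k : ℝ) + 1) ^ 4)) (1 / (30 * 100 * ((k : ℝ) + 1) ^ 4)))⌉
          ≤ (k : ℤ) →
        (CCdist (fun x y => μA x * μB y) f 0.49 : ℝ) ≤ C * (k : ℝ) ^ 2 := by
  obtain ⟨C, hC, hgeneral⟩ := cc_le_k_sq_general (ε := 0.49) (by norm_num) (by norm_num)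
  refine ⟨C, hC, fun n f μA μB hA hB k hk hs => ?_⟩
  have hk' : (20 : ℝ) ≤ k := by exact_mod_cast hk
  have hδ : 1 / (30 * 100 * ((k : ℝ) + 1) ^ 4) ≤ 0.49 ^ 2 / 64 := by
    have hpow : (1 : ℝ) ≤ (k + 1) ^ 4 := one_le_pow₀ (by linarith)
    calc 1 / (30 * 100 * ((k : ℝ) + 1) ^ 4) ≤ 1 / (30 * 100) :=
          one_div_le_one_div_of_le (by norm_num) (by linarith)
      _ ≤ 0.49 ^ 2 / 64 := by norm_num
  have hlog := Int.ceil_le.1 hs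
  push_cast at hlog
  exact hgeneral _ _ f _ (hA.isDist2_mul hB) ⟨μA, μB, rfl⟩ _ _ (by positivity)
    (hδ.trans (by norm_num)) (by positivity) hδ k (by linarith) (by linarith)
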